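/- Let a, c ∈ ℝ and set Q(t) = at² − t + c. On an open set U ⊆ ℝ² where R¹ + R² ≠ 0, R¹ − R² > 0, Q(R¹) > 0 and Q(R²) < 0, consider the metric with inverse coefficients G¹¹ = (R¹ + R²)²Q(R¹)/(R¹ − R²) and G²² = −(R¹ + R²)²Q(R²)/(R¹ − R²). Then: (i) the coefficients defined by ∂₂G¹¹ = −2AG¹¹ and ∂₁G²² = −2BG²² are A = 1/(2(R² − R¹)) − 1/(R¹ + R²) and B = 1/(2(R¹ − R²)) − 1/(R¹ + R²), independent of a, c; and (ii) the constant-curvature-one condition (∂₂A + A²)G²² + (A/2)∂₂G²² + (∂₁B + B²)G¹¹ + (B/2)∂₁G¹¹ + 1 = 0 holds on U for all a, c. -/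

import Mathlib

/-- First partial derivative `∂₁ = ∂/∂R¹` of a function on `ℝ²`. -/
noncomputable def pd1 (f : ℝ × ℝ → ℝ) (p : ℝ × ℝ) : ℝ := fderiv ℝ f p (1, 0)

/-- Second partial derivative `∂₂ = ∂/∂R²` of a function on `ℝ²`. -/
noncomputable def pd2 (f : ℝ × ℝ → ℝ) (p : ℝ × ℝ) : ℝ := fderiv ℝ f p (0, 1)

/-!
Exchanging `R¹` and `R²` exchanges `G¹¹` with `G²²` and `A` with `B`, so the curvature expression is
the sum of the values at `(R¹, R²)` and `(R², R¹)` of the single function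
`(∂₁B + B²) G¹¹ + (B/2) ∂₁G¹¹`. With `s = R¹ + R²` and `d = R¹ - R²` that function is
`(2d² - s²) / (2d³) Q(R¹) + s(s - 2d) / (4d²) Q'(R¹)`, for every differentiable `Q`. The symmetrized
sum vanishes for `Q = 1` and `Q = t²` and equals `1` for `Q = t`, hence it is `-k` for
`Q(t) = at² - kt + c`, the case of constant curvature `k`.
-/

section PartialDerivatives

variable {f : ℝ × ℝ → ℝ} {p : ℝ × ℝ} {f' : ℝ}

lemma pd1_comp_swap (f : ℝ × ℝ → ℝ) (p : ℝ × ℝ) :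
    pd1 (fun q => f q.swap) p = pd2 f p.swap :=
  congrArg (· (1, 0)) ((ContinuousLinearEquiv.prodComm ℝ ℝ ℝ).comp_right_fderiv (f := f) (x := p))

lemma pd2_comp_swap (f : ℝ × ℝ → ℝ) (p : ℝ × ℝ) :
    pd2 (fun q => f q.swap) p = pd1 f p.swap :=
  (pd1_comp_swap (fun q => f q.swap) p.swap).symm

lemma pd1_eq_of_hasDerivAt (hf : DifferentiableAt ℝ f p)
    (h : HasDerivAt (fun t => f (t, p.2)) f' p.1) : pd1 f p = f' :=
  (hf.hasFDerivAt.comp_hasDerivAt p.1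
    ((hasDerivAt_id p.1).prodMk (hasDerivAt_const p.1 p.2))).unique h

lemma pd2_eq_of_hasDerivAt (hf : DifferentiableAt ℝ f p)
    (h : HasDerivAt (fun t => f (p.1, t)) f' p.2) : pd2 f p = f' :=
  (hf.hasFDerivAt.comp_hasDerivAt p.2
    ((hasDerivAt_const p.2 p.1).prodMk (hasDerivAt_id p.2))).unique h

end PartialDerivatives

/-- The inverse metric coefficient `G¹¹ = (R¹ + R²)² Q(R¹) / (R¹ - R²)`, for an arbitrary function
`Q`. The coefficient `G²²` is its reflection `p ↦ invCoeff Q p.swap`. -/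
noncomputable def invCoeff (Q : ℝ → ℝ) (p : ℝ × ℝ) : ℝ :=
  (p.1 + p.2) ^ 2 * Q p.1 / (p.1 - p.2)

/-- The coefficient `B = 1 / (2(R¹ - R²)) - 1 / (R¹ + R²)`, which is the Christoffel symbol `Γ²₁₂`
of the metric. The coefficient `A = Γ¹₁₂` is its reflection `p ↦ christoffel p.swap`. -/
noncomputable def christoffel (p : ℝ × ℝ) : ℝ :=
  1 / (2 * (p.1 - p.2)) - 1 / (p.1 + p.2)

/-- The part `(∂₁B + B²) G¹¹ + (B/2) ∂₁G¹¹` of the curvature expression. The remaining part, in `A`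
and `G²²`, is its value at the reflected point. -/
noncomputable def curvatureSummand (Q : ℝ → ℝ) (p : ℝ × ℝ) : ℝ :=
  (pd1 christoffel p + christoffel p ^ 2) * invCoeff Q p +
    christoffel p / 2 * pd1 (invCoeff Q) p

lemma invCoeff_swap (Q : ℝ → ℝ) (p : ℝ × ℝ) :
    invCoeff Q p.swap = -((p.1 + p.2) ^ 2 * Q p.2 / (p.1 - p.2)) := by
  rw [invCoeff, Prod.fst_swap, Prod.snd_swap, add_comm, ← neg_sub p.1, div_neg]

lemma christoffel_swap (p : ℝ × ℝ) :
    christoffel p.swap = 1 / (2 * (p.2 - p.1)) - 1 / (p.1 + p.2) := by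
  rw [christoffel, Prod.fst_swap, Prod.snd_swap, add_comm p.2]

section EllipsoidalMetric

variable {Q : ℝ → ℝ} {Q' : ℝ} {p : ℝ × ℝ}

lemma differentiableAt_invCoeff (hQ : DifferentiableAt ℝ Q p.1) (hd : p.1 - p.2 ≠ 0) :
    DifferentiableAt ℝ (invCoeff Q) p := by
  unfold invCoeff
  fun_prop (disch := assumption)

lemma differentiableAt_christoffel (hs : p.1 + p.2 ≠ 0) (hd : p.1 - p.2 ≠ 0) :
    DifferentiableAt ℝ christoffel p := by
  unfold christoffel
  fun_prop (disch := simpa)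

lemma pd1_invCoeff (hQ : HasDerivAt Q Q' p.1) (hd : p.1 - p.2 ≠ 0) :
    pd1 (invCoeff Q) p =
      (2 * (p.1 + p.2) * Q p.1 + (p.1 + p.2) ^ 2 * Q') / (p.1 - p.2) -
        (p.1 + p.2) ^ 2 * Q p.1 / (p.1 - p.2) ^ 2 := by
  have hsum : HasDerivAt (fun t => (t + p.2) ^ 2) (2 * (p.1 + p.2)) p.1 := by
    simpa using ((hasDerivAt_id p.1).add_const p.2).fun_pow 2
  refine pd1_eq_of_hasDerivAt (differentiableAt_invCoeff hQ.differentiableAt hd)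
    (((hsum.mul hQ).div ((hasDerivAt_id p.1).sub_const p.2) hd).congr_deriv ?_)
  simp only [Pi.mul_apply, id]
  field_simp

lemma pd2_invCoeff (hQ : DifferentiableAt ℝ Q p.1) (hs : p.1 + p.2 ≠ 0) (hd : p.1 - p.2 ≠ 0) :
    pd2 (invCoeff Q) p = -2 * christoffel p.swap * invCoeff Q p := by
  have hsum : HasDerivAt (fun t => (p.1 + t) ^ 2) (2 * (p.1 + p.2)) p.2 := by
    simpa using ((hasDerivAt_id p.2).const_add p.1).fun_pow 2
  refine pd2_eq_of_hasDerivAt (differentiableAt_invCoeff hQ hd)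
    (((hsum.mul_const (Q p.1)).div ((hasDerivAt_id p.2).const_sub p.1) hd).congr_deriv ?_)
  rw [christoffel_swap, invCoeff, ← neg_sub p.1 p.2]
  simp only [id]
  field_simp
  ring

lemma pd1_christoffel (hs : p.1 + p.2 ≠ 0) (hd : p.1 - p.2 ≠ 0) :
    pd1 christoffel p = 1 / (p.1 + p.2) ^ 2 - 1 / (2 * (p.1 - p.2) ^ 2) := by
  have hdiff := ((hasDerivAt_id p.1).sub_const p.2).const_mul 2
  have hsum := (hasDerivAt_id p.1).add_const p.2
  refine pd1_eq_of_hasDerivAt (differentiableAt_christoffel hs hd)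
    ((((hasDerivAt_const p.1 1).div hdiff (mul_ne_zero two_ne_zero hd)).sub
      ((hasDerivAt_const p.1 1).div hsum hs)).congr_deriv ?_)
  simp only [id]
  field_simp
  ring

lemma curvatureSummand_eq (hQ : HasDerivAt Q Q' p.1) (hs : p.1 + p.2 ≠ 0)
    (hd : p.1 - p.2 ≠ 0) :
    curvatureSummand Q p =
      (2 * (p.1 - p.2) ^ 2 - (p.1 + p.2) ^ 2) / (2 * (p.1 - p.2) ^ 3) * Q p.1 +
        (p.1 + p.2) * (p.1 + p.2 - 2 * (p.1 - p.2)) / (4 * (p.1 - p.2) ^ 2) * Q' := by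
  rw [curvatureSummand, pd1_christoffel hs hd, pd1_invCoeff hQ hd, christoffel, invCoeff]
  field_simp
  ring

end EllipsoidalMetric

lemma hasDerivAt_quadratic (a k c t : ℝ) :
    HasDerivAt (fun t => a * t ^ 2 - k * t + c) (2 * a * t - k) t := by
  refine (((((hasDerivAt_id t).pow 2).const_mul a).sub
    ((hasDerivAt_id t).const_mul k)).add_const c).congr_deriv ?_
  simp only [id, Nat.cast_ofNat]
  ring

lemma curvatureSummand_swap_add_of_quadratic (a k c : ℝ) {Q : ℝ → ℝ}
    (hQ : ∀ t, Q t = a * t ^ 2 - k * t + c) {p : ℝ × ℝ} (hs : p.1 + p.2 ≠ 0) (hd : p.1 - p.2 ≠ 0) :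
    curvatureSummand Q p.swap + curvatureSummand Q p + k = 0 := by
  have hQ' (t : ℝ) : HasDerivAt Q (2 * a * t - k) t := funext hQ ▸ hasDerivAt_quadratic a k c t
  have hs' : p.swap.1 + p.swap.2 ≠ 0 := by rwa [Prod.fst_swap, Prod.snd_swap, add_comm]
  have hd' : p.swap.1 - p.swap.2 ≠ 0 := by
    rwa [Prod.fst_swap, Prod.snd_swap, ← neg_sub, neg_ne_zero]
  rw [curvatureSummand_eq (hQ' _) hs' hd', curvatureSummand_eq (hQ' _) hs hd,
    Prod.fst_swap, Prod.snd_swap, ← neg_sub p.1 p.2, hQ, hQ]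
  field_simp
  ring

theorem ellipsoidal_stereographic_general (a k c : ℝ) {Q : ℝ → ℝ}
    (hQ : ∀ t, Q t = a * t ^ 2 - k * t + c) {G11 G22 A B : ℝ × ℝ → ℝ}
    (hG11 : ∀ p : ℝ × ℝ, G11 p = (p.1 + p.2) ^ 2 * Q p.1 / (p.1 - p.2))
    (hG22 : ∀ p : ℝ × ℝ, G22 p = -((p.1 + p.2) ^ 2 * Q p.2 / (p.1 - p.2)))
    (hA : ∀ p : ℝ × ℝ, A p = 1 / (2 * (p.2 - p.1)) - 1 / (p.1 + p.2))
    (hB : ∀ p : ℝ × ℝ, B p = 1 / (2 * (p.1 - p.2)) - 1 / (p.1 + p.2))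
    {p : ℝ × ℝ} (hs : p.1 + p.2 ≠ 0) (hne : p.1 ≠ p.2) :
    (pd2 G11 p = -2 * A p * G11 p ∧ pd1 G22 p = -2 * B p * G22 p) ∧
      (pd2 A p + A p ^ 2) * G22 p + A p / 2 * pd2 G22 p +
        (pd1 B p + B p ^ 2) * G11 p + B p / 2 * pd1 G11 p + k = 0 := by
  obtain rfl : G11 = invCoeff Q := funext hG11
  obtain rfl : G22 = fun q => invCoeff Q q.swap :=
    funext fun q => (hG22 q).trans (invCoeff_swap Q q).symm
  obtain rfl : A = fun q => christoffel q.swap :=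
    funext fun q => (hA q).trans (christoffel_swap q).symm
  obtain rfl : B = christoffel := funext hB
  have hdiff (t : ℝ) : DifferentiableAt ℝ Q t :=
    funext hQ ▸ (hasDerivAt_quadratic a k c t).differentiableAt
  rw [pd1_comp_swap, pd2_comp_swap, pd2_comp_swap]
  exact ⟨⟨pd2_invCoeff (hdiff _) hs (sub_ne_zero.mpr hne),
    pd2_invCoeff (hdiff _) (by rwa [add_comm] at hs) (sub_ne_zero.mpr hne.symm)⟩,
    by simpa only [curvatureSummand, add_assoc] using
      curvatureSummand_swap_add_of_quadratic a k c hQ hs (sub_ne_zero.mpr hne)⟩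

/-- For the metric arising from planar ellipsoidal coordinates under
stereographic projection, with `G¹¹ = (R¹ + R²)²Q(R¹)/(R¹ − R²)`,
`G²² = −(R¹ + R²)²Q(R²)/(R¹ − R²)`, `Q(t) = at² − t + c`:
(i) `A = 1/(2(R² − R¹)) − 1/(R¹ + R²)`, `B = 1/(2(R¹ − R²)) − 1/(R¹ + R²)`,
independent of `a, c`;
(ii) the constant-curvature-one condition holds for all `a, c`. -/
theorem ellipsoidal_stereographic (a c : ℝ) (Q : ℝ → ℝ)
    (hQ : ∀ t, Q t = a * t ^ 2 - t + c)
    (U : Set (ℝ × ℝ)) (hUopen : IsOpen U)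
    (hU : ∀ p ∈ U, p.1 + p.2 ≠ 0 ∧ 0 < p.1 - p.2 ∧ 0 < Q p.1 ∧ Q p.2 < 0)
    (G11 G22 A B : ℝ × ℝ → ℝ)
    (hG11 : ∀ p : ℝ × ℝ, G11 p = (p.1 + p.2) ^ 2 * Q p.1 / (p.1 - p.2))
    (hG22 : ∀ p : ℝ × ℝ, G22 p = -((p.1 + p.2) ^ 2 * Q p.2 / (p.1 - p.2)))
    (hA : ∀ p : ℝ × ℝ, A p = 1 / (2 * (p.2 - p.1)) - 1 / (p.1 + p.2))
    (hB : ∀ p : ℝ × ℝ, B p = 1 / (2 * (p.1 - p.2)) - 1 / (p.1 + p.2)) :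
    (∀ p ∈ U, pd2 G11 p = -2 * A p * G11 p ∧ pd1 G22 p = -2 * B p * G22 p) ∧
    (∀ p ∈ U,
      (pd2 A p + A p ^ 2) * G22 p + A p / 2 * pd2 G22 p +
        (pd1 B p + B p ^ 2) * G11 p + B p / 2 * pd1 G11 p + 1 = 0) := by
  have key (p : ℝ × ℝ) (hp : p ∈ U) := ellipsoidal_stereographic_general a 1 c (by simpa using hQ)
    hG11 hG22 hA hB (hU p hp).1 (sub_pos.mp (hU p hp).2.1).ne'
  exact ⟨fun p hp => (key p hp).1, fun p hp => (key p hp).2⟩
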